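/- There exists a function f on ℝ², 1-periodic in both variables, such that for every 1 ≤ p < ∞, f belongs to the mixed norm class V_p[V_p] but f does not belong to H_p^{(2)}. Consequently, V_p[V_p] ⊄ H_p^{(2)} for every 1 ≤ p < ∞. -/

import Mathlib

open MeasureTheory Filter Set
open scoped ENNReal

noncomputable section

/-- A function of two real variables that is 1-periodic in each variable. -/
def BiPeriodic (f : ℝ → ℝ → ℝ) : Prop :=
  (∀ x y, f (x + 1) y = f x y) ∧ (∀ x y, f x (y + 1) = f x y)

/-- A 1-periodic function of one real variable. -/
def Periodic1 (g : ℝ → ℝ) : Prop := ∀ x, g (x + 1) = g x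

/-- The `L^p` norm of a function over `[0,1]^2` (as a value in `[0,∞]`). -/
noncomputable def lpNorm2 (p : ℝ) (f : ℝ → ℝ → ℝ) : ℝ≥0∞ :=
  (∫⁻ x in Set.Icc (0:ℝ) 1, ∫⁻ y in Set.Icc (0:ℝ) 1,
      ENNReal.ofReal (|f x y| ^ p)) ^ (1 / p)

/-- The `L^p` norm of a function over `[0,1]` (as a value in `[0,∞]`). -/
noncomputable def lpNorm1 (p : ℝ) (g : ℝ → ℝ) : ℝ≥0∞ :=
  (∫⁻ x in Set.Icc (0:ℝ) 1, ENNReal.ofReal (|g x| ^ p)) ^ (1 / p)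

/-- Membership in `L^p([0,1]^2)`: measurable, 1-periodic in each variable,
finite `L^p` norm. -/
def MemLp2 (p : ℝ) (f : ℝ → ℝ → ℝ) : Prop :=
  Measurable (Function.uncurry f) ∧ BiPeriodic f ∧ lpNorm2 p f < ⊤

/-- Membership in `L^p([0,1])` for 1-periodic functions of one variable. -/
def MemLp1 (p : ℝ) (g : ℝ → ℝ) : Prop :=
  Measurable g ∧ Periodic1 g ∧ lpNorm1 p g < ⊤

/-- The (total) `L^p` modulus of continuity `ω(f;δ)_p` of a bivariate function. -/
noncomputable def modulus2 (p : ℝ) (f : ℝ → ℝ → ℝ) (δ : ℝ) : ℝ≥0∞ :=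
  ⨆ (h : ℝ × ℝ) (_ : Real.sqrt (h.1 ^ 2 + h.2 ^ 2) ≤ δ),
    lpNorm2 p (fun x y => f (x + h.1) (y + h.2) - f x y)

/-- The `L^p` modulus of continuity `ω(g;δ)_p` of a univariate function. -/
noncomputable def modulus1 (p : ℝ) (g : ℝ → ℝ) (δ : ℝ) : ℝ≥0∞ :=
  ⨆ (h : ℝ) (_ : h ∈ Set.Icc 0 δ), lpNorm1 p (fun x => g (x + h) - g x)

/-- The mixed `L^p` modulus of continuity `ω(f;u,v)_p`. -/
noncomputable def mixedModulus (p : ℝ) (f : ℝ → ℝ → ℝ) (u v : ℝ) : ℝ≥0∞ :=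
  ⨆ (s : ℝ) (_ : s ∈ Set.Icc 0 u) (t : ℝ) (_ : t ∈ Set.Icc 0 v),
    lpNorm2 p (fun x y => f (x + s) (y + t) - f (x + s) y - f x (y + t) + f x y)

/-- `J_p(f) = ∫₀¹ t^{-1/p} ω(f;t)_p dt/t`. -/
noncomputable def Jp (p : ℝ) (f : ℝ → ℝ → ℝ) : ℝ≥0∞ :=
  ∫⁻ t in Set.Ioc (0:ℝ) 1, ENNReal.ofReal (t ^ (-(1/p)) / t) * modulus2 p f t

/-- `K_p(f) = ∫₀¹ t^{-1/p} [ω(f;t,1)_p + ω(f;1,t)_p] dt/t`. -/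
noncomputable def Kp (p : ℝ) (f : ℝ → ℝ → ℝ) : ℝ≥0∞ :=
  ∫⁻ t in Set.Ioc (0:ℝ) 1,
    ENNReal.ofReal (t ^ (-(1/p)) / t) * (mixedModulus p f t 1 + mixedModulus p f 1 t)

/-- `I_p(f) = ∫₀¹∫₀¹ (uv)^{-1/p} ω(f;u,v)_p (du/u)(dv/v)`. -/
noncomputable def Ip (p : ℝ) (f : ℝ → ℝ → ℝ) : ℝ≥0∞ :=
  ∫⁻ u in Set.Ioc (0:ℝ) 1, ∫⁻ v in Set.Ioc (0:ℝ) 1,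
    ENNReal.ofReal ((u * v) ^ (-(1/p)) / (u * v)) * mixedModulus p f u v

/-- The essential supremum norm of `f` over `[0,1]^2`. -/
noncomputable def supNorm2 (f : ℝ → ℝ → ℝ) : ℝ≥0∞ :=
  essSup (fun z : ℝ × ℝ => ENNReal.ofReal |f z.1 z.2|)
    (volume.restrict ((Set.Icc (0:ℝ) 1) ×ˢ (Set.Icc (0:ℝ) 1)))

/-- The Wiener `p`-variation of a 1-periodic function `g`, as a value in `[0,∞]`:
the supremum over partitions `x₀ < x₁ < ... < xₙ = x₀ + 1` of
`(∑ |g(x_{k+1}) - g(x_k)|^p)^{1/p}`. -/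
noncomputable def vp (p : ℝ) (g : ℝ → ℝ) : ℝ≥0∞ :=
  ⨆ (n : ℕ) (x : ℕ → ℝ) (_ : ∀ i < n, x i < x (i + 1)) (_ : x n = x 0 + 1),
    ENNReal.ofReal ((∑ k ∈ Finset.range n, |g (x (k + 1)) - g (x k)| ^ p) ^ (1 / p))

/-- The Hardy–Vitali type total `p`-variation of a bivariate function,
as a value in `[0,∞]`: the supremum over nets of
`(∑∑ |Δf(x_i,y_j)|^p)^{1/p}`. -/
noncomputable def vp2 (p : ℝ) (f : ℝ → ℝ → ℝ) : ℝ≥0∞ :=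
  ⨆ (m : ℕ) (n : ℕ) (x : ℕ → ℝ) (y : ℕ → ℝ)
    (_ : ∀ i < m, x i < x (i + 1)) (_ : x m = x 0 + 1)
    (_ : ∀ j < n, y j < y (j + 1)) (_ : y n = y 0 + 1),
    ENNReal.ofReal ((∑ i ∈ Finset.range m, ∑ j ∈ Finset.range n,
      |f (x (i + 1)) (y (j + 1)) - f (x (i + 1)) (y j)
        - f (x i) (y (j + 1)) + f (x i) (y j)| ^ p) ^ (1 / p))

/-- Membership in the Hardy class `H_p^{(2)}`: finite Vitali `p`-variation and
all linear sections of bounded `p`-variation. -/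
def MemHp2 (p : ℝ) (f : ℝ → ℝ → ℝ) : Prop :=
  vp2 p f < ⊤ ∧ (∀ x, vp p (fun y => f x y) < ⊤) ∧ (∀ y, vp p (fun x => f x y) < ⊤)

/-- Membership in the mixed norm class `V_p[V_p]`: all sections have bounded
`p`-variation and the functions `x ↦ v_p(f_x)`, `y ↦ v_p(f_y)` are themselves
of bounded `p`-variation. -/
def MemVpVp (p : ℝ) (f : ℝ → ℝ → ℝ) : Prop :=
  (∀ x, vp p (fun y => f x y) < ⊤) ∧ (∀ y, vp p (fun x => f x y) < ⊤) ∧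
  vp p (fun x => (vp p (fun y => f x y)).toReal) < ⊤ ∧
  vp p (fun y => (vp p (fun x => f x y)).toReal) < ⊤

/-- `W_p(f) = v_p(φ_p[f]) + v_p(ψ_p[f])`, where `φ_p[f](x) = v_p(f_x)` and
`ψ_p[f](y) = v_p(f_y)`. -/
noncomputable def Wp (p : ℝ) (f : ℝ → ℝ → ℝ) : ℝ≥0∞ :=
  vp p (fun x => (vp p (fun y => f x y)).toReal)
    + vp p (fun y => (vp p (fun x => f x y)).toReal)

/-- Membership in `L^p_0([0,1]^2)`: membership in `L^p([0,1]^2)` together with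
vanishing of the linear mean values `∫₀¹ f(x,t) dt` and `∫₀¹ f(t,y) dt` for a.e.
`x` resp. `y`. -/
def MemLp20 (p : ℝ) (f : ℝ → ℝ → ℝ) : Prop :=
  MemLp2 p f ∧ (∀ᵐ x : ℝ ∂volume, ∫ t in (0:ℝ)..1, f x t = 0) ∧
    (∀ᵐ y : ℝ ∂volume, ∫ t in (0:ℝ)..1, f t y = 0)

/-- `T` is a trigonometric polynomial of degree `(n,m)` in two variables. -/
def IsTrigPoly2 (n m : ℕ) (T : ℝ → ℝ → ℝ) : Prop :=
  ∃ a b c d : ℕ → ℕ → ℝ, ∀ x y : ℝ,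
    T x y = ∑ j ∈ Finset.range (n + 1), ∑ k ∈ Finset.range (m + 1),
      (a j k * Real.cos (2 * Real.pi * j * x) * Real.cos (2 * Real.pi * k * y)
        + b j k * Real.cos (2 * Real.pi * j * x) * Real.sin (2 * Real.pi * k * y)
        + c j k * Real.sin (2 * Real.pi * j * x) * Real.cos (2 * Real.pi * k * y)
        + d j k * Real.sin (2 * Real.pi * j * x) * Real.sin (2 * Real.pi * k * y))

end

/-!
The example is `f x y = g (x + y)` with `g` the indicator of the non-integers. All sections of `f`
are translates of `g`, which has two unit jumps per period, so `φ_p[f]` and `ψ_p[f]` are finite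
constants. On the other hand, every cell of the uniform `n × n` net that lies on the antidiagonal
contributes a second difference of `g` at an integer, namely `2`; there are `n` such cells, so
`v_p^{(2)}(f) ≥ 2 n^{1/p}` for every `n ≥ 2`.
-/

section Variation

variable {p : ℝ}

theorem vp_comp_add_right_le (p : ℝ) (g : ℝ → ℝ) (c : ℝ) :
    vp p (fun t => g (t + c)) ≤ vp p g := by
  refine iSup_le fun n => iSup_le fun x => iSup_le fun hlt => iSup_le fun hend => ?_
  exact le_iSup_of_le n <| le_iSup_of_le (fun i => x i + c) <|
    le_iSup_of_le (fun i hi => by simpa using hlt i hi) <|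
    le_iSup_of_le (by simp only [hend]; ring) le_rfl

theorem vp_comp_add_right (p : ℝ) (g : ℝ → ℝ) (c : ℝ) :
    vp p (fun t => g (t + c)) = vp p g := by
  refine le_antisymm (vp_comp_add_right_le p g c) ?_
  simpa using vp_comp_add_right_le p (fun t => g (t + c)) (-c)

theorem vp_comp_add_left (p : ℝ) (g : ℝ → ℝ) (c : ℝ) :
    vp p (fun t => g (c + t)) = vp p g := by
  simpa only [add_comm] using vp_comp_add_right p g c

theorem vp_le_of_rpow_abs_sub_le {g F : ℝ → ℝ} {C : ℝ} (hp : 0 ≤ p)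
    (hgF : ∀ a b, a < b → |g b - g a| ^ p ≤ F b - F a) (hF : ∀ a, F (a + 1) = F a + C) :
    vp p g ≤ ENNReal.ofReal (C ^ (1 / p)) := by
  refine iSup_le fun n => iSup_le fun x => iSup_le fun hlt => iSup_le fun hend => ?_
  gcongr
  calc ∑ k ∈ Finset.range n, |g (x (k + 1)) - g (x k)| ^ p
      ≤ ∑ k ∈ Finset.range n, (F (x (k + 1)) - F (x k)) :=
        Finset.sum_le_sum fun k hk => hgF _ _ (hlt k (Finset.mem_range.1 hk))
    _ = F (x n) - F (x 0) := Finset.sum_range_sub (fun k => F (x k)) n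
    _ = C := by rw [hend, hF, add_sub_cancel_left]

theorem vp_const (hp : 0 < p) (c : ℝ) : vp p (fun _ => c) = 0 := by
  simpa [Real.zero_rpow hp.ne', hp.ne'] using
    vp_le_of_rpow_abs_sub_le (g := fun _ => c) (F := 0) (C := 0) hp.le
      (by simp [Real.zero_rpow hp.ne']) (by simp)

theorem memVpVp_comp_add (hp : 0 < p) {g : ℝ → ℝ} (hg : vp p g < ⊤) :
    MemVpVp p fun x y => g (x + y) := by
  simp only [MemVpVp, vp_comp_add_left, vp_comp_add_right, vp_const hp]
  exact ⟨fun _ => hg, fun _ => hg, ENNReal.zero_lt_top, ENNReal.zero_lt_top⟩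

theorem biPeriodic_comp_add {g : ℝ → ℝ} (hg : Periodic1 g) : BiPeriodic fun x y => g (x + y) :=
  ⟨fun x y => by simp only [add_right_comm x 1 y, hg _],
    fun x y => by simp only [← add_assoc, hg _]⟩

end Variation

section VitaliVariation

open scoped Topology

theorem le_vp2 (p : ℝ) (f : ℝ → ℝ → ℝ) {m n : ℕ} {x y : ℕ → ℝ}
    (hx : ∀ i < m, x i < x (i + 1)) (hxm : x m = x 0 + 1)
    (hy : ∀ j < n, y j < y (j + 1)) (hyn : y n = y 0 + 1) :
    ENNReal.ofReal ((∑ i ∈ Finset.range m, ∑ j ∈ Finset.range n,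
      |f (x (i + 1)) (y (j + 1)) - f (x (i + 1)) (y j)
        - f (x i) (y (j + 1)) + f (x i) (y j)| ^ p) ^ (1 / p)) ≤ vp2 p f :=
  le_iSup_of_le m <| le_iSup_of_le n <| le_iSup_of_le x <| le_iSup_of_le y <|
    le_iSup_of_le hx <| le_iSup_of_le hxm <| le_iSup_of_le hy <| le_iSup_of_le hyn le_rfl

theorem uniform_partition_lt {n : ℕ} (hn : 0 < n) (a : ℝ) (i : ℕ) :
    a + i / n < a + (i + 1 : ℕ) / n := by
  gcongr
  exact i.lt_succ_self

variable {p : ℝ}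

theorem ofReal_mul_rpow_abs_second_difference_le_vp2 (hp : 0 ≤ p) (g : ℝ → ℝ) (a : ℝ) {n : ℕ}
    (hn : 0 < n) :
    ENNReal.ofReal ((n * |g (a + 1 / n) - 2 * g a + g (a - 1 / n)| ^ p) ^ (1 / p)) ≤
      vp2 p fun x y => g (x + y) := by
  have hn' : (n : ℝ) ≠ 0 := by positivity
  refine le_trans ?_ (le_vp2 p _ (m := n) (n := n)
    (x := fun i => a - 1 + i / n) (y := fun j => 0 + j / n)
    (fun i _ => uniform_partition_lt hn _ i) (by simp [hn'])
    (fun j _ => uniform_partition_lt hn _ j) (by simp [hn']))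
  gcongr
  rw [← nsmul_eq_mul]
  nth_rw 1 [← Finset.card_range n]
  refine Finset.card_nsmul_le_sum _ _ _ fun i hi => ?_
  -- The cell `(i, j)` with `i + j + 1 = n` has two opposite corners on the line `x + y = a`.
  obtain ⟨j, hij⟩ : ∃ j, n = i + j + 1 := Nat.exists_eq_add_of_lt (Finset.mem_range.1 hi)
  refine le_of_eq_of_le ?_ (Finset.single_le_sum (fun _ _ => by positivity)
    (Finset.mem_range.2 (by omega : j < n)))
  have hcast : (n : ℝ) = i + j + 1 := by exact_mod_cast hij
  have hupper : a - 1 + (i + 1 : ℕ) / n + (0 + (j + 1 : ℕ) / n) = a + 1 / n := by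
    field_simp; push_cast; linarith
  have hright : a - 1 + (i + 1 : ℕ) / n + (0 + j / n) = a := by
    field_simp; push_cast; linarith
  have hleft : a - 1 + i / n + (0 + (j + 1 : ℕ) / n) = a := by
    field_simp; push_cast; linarith
  have hlower : a - 1 + i / n + (0 + j / n) = a - 1 / n := by
    field_simp; linarith
  simp only [hupper, hright, hleft, hlower]
  ring_nf

theorem vp2_comp_add_eq_top (hp : 0 < p) {g : ℝ → ℝ} {a c : ℝ} (hc : 0 < c)
    (hg : ∀ᶠ n : ℕ in atTop, c ≤ |g (a + 1 / n) - 2 * g a + g (a - 1 / n)|) :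
    vp2 p (fun x y => g (x + y)) = ⊤ := by
  have hlim : Tendsto (fun n : ℕ => ENNReal.ofReal ((n * c ^ p) ^ (1 / p))) atTop (𝓝 ⊤) :=
    ENNReal.tendsto_ofReal_atTop.comp <| (tendsto_rpow_atTop (by positivity)).comp <|
      tendsto_natCast_atTop_atTop.atTop_mul_const (by positivity)
  refine top_le_iff.1 (le_of_tendsto hlim ?_)
  filter_upwards [hg, eventually_gt_atTop 0] with n hcn hn
  refine le_trans ?_ (ofReal_mul_rpow_abs_second_difference_le_vp2 hp.le g a hn)
  gcongr

end VitaliVariation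

section NonIntegerIndicator

/-- The indicator function of `ℝ \ ℤ`. Writing it as `⌈x⌉ - ⌊x⌋` exhibits it as a difference of
monotone functions. -/
noncomputable def nonIntegerIndicator (x : ℝ) : ℝ := ⌈x⌉ - ⌊x⌋

theorem periodic1_nonIntegerIndicator : Periodic1 nonIntegerIndicator := fun x => by
  simp [nonIntegerIndicator]

theorem nonIntegerIndicator_eq_zero_or_one (x : ℝ) :
    nonIntegerIndicator x = 0 ∨ nonIntegerIndicator x = 1 := by
  have hle : ⌊x⌋ ≤ ⌈x⌉ := Int.floor_le_ceil x
  have hge : ⌈x⌉ ≤ ⌊x⌋ + 1 := Int.ceil_le_floor_add_one x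
  obtain h | h : ⌈x⌉ = ⌊x⌋ ∨ ⌈x⌉ = ⌊x⌋ + 1 := by omega
  all_goals simp [nonIntegerIndicator, h]

theorem nonIntegerIndicator_intCast (k : ℤ) : nonIntegerIndicator k = 0 := by
  simp [nonIntegerIndicator]

theorem nonIntegerIndicator_of_mem_Ioo {k : ℤ} {x : ℝ} (hx : x ∈ Ioo (k : ℝ) (k + 1)) :
    nonIntegerIndicator x = 1 := by
  have hfloor : ⌊x⌋ = k := Int.floor_eq_iff.2 ⟨hx.1.le, hx.2⟩
  have hceil : ⌈x⌉ = k + 1 := Int.ceil_eq_iff.2 ⟨by simpa using hx.1, by simpa using hx.2.le⟩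
  simp [nonIntegerIndicator, hfloor, hceil]

theorem abs_nonIntegerIndicator_sub_le {a b : ℝ} (hab : a ≤ b) :
    |nonIntegerIndicator b - nonIntegerIndicator a| ≤ (⌈b⌉ + ⌊b⌋ : ℝ) - (⌈a⌉ + ⌊a⌋) := by
  have hceil : (⌈a⌉ : ℝ) ≤ ⌈b⌉ := by exact_mod_cast Int.ceil_mono hab
  have hfloor : (⌊a⌋ : ℝ) ≤ ⌊b⌋ := by exact_mod_cast Int.floor_mono hab
  rw [nonIntegerIndicator, nonIntegerIndicator, abs_le]
  constructor <;> linarith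

theorem rpow_abs_nonIntegerIndicator_sub {p : ℝ} (hp : p ≠ 0) (a b : ℝ) :
    |nonIntegerIndicator b - nonIntegerIndicator a| ^ p =
      |nonIntegerIndicator b - nonIntegerIndicator a| := by
  rcases nonIntegerIndicator_eq_zero_or_one a with ha | ha <;>
    rcases nonIntegerIndicator_eq_zero_or_one b with hb | hb <;>
    simp [ha, hb, Real.zero_rpow hp]

theorem vp_nonIntegerIndicator_lt_top {p : ℝ} (hp : 0 < p) : vp p nonIntegerIndicator < ⊤ := by
  refine (vp_le_of_rpow_abs_sub_le (F := fun t => ⌈t⌉ + ⌊t⌋) (C := 2) hp.le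
    (fun a b hab => ?_) fun a => ?_).trans_lt ENNReal.ofReal_lt_top
  · rw [rpow_abs_nonIntegerIndicator_sub hp.ne']
    exact abs_nonIntegerIndicator_sub_le hab.le
  · rw [Int.ceil_add_one, Int.floor_add_one]
    push_cast
    ring

theorem nonIntegerIndicator_second_difference_zero {h : ℝ} (hh : h ∈ Ioo (0 : ℝ) 1) :
    nonIntegerIndicator (0 + h) - 2 * nonIntegerIndicator 0 + nonIntegerIndicator (0 - h) = 2 := by
  have hright : nonIntegerIndicator (0 + h) = 1 :=
    nonIntegerIndicator_of_mem_Ioo (k := 0) (by simpa using hh)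
  have hleft : nonIntegerIndicator (0 - h) = 1 :=
    nonIntegerIndicator_of_mem_Ioo (k := -1) (by simpa using hh.symm)
  have hmid : nonIntegerIndicator 0 = 0 := by simpa using nonIntegerIndicator_intCast 0
  rw [hright, hleft, hmid]
  norm_num

theorem vp2_nonIntegerIndicator_comp_add {p : ℝ} (hp : 0 < p) :
    vp2 p (fun x y => nonIntegerIndicator (x + y)) = ⊤ := by
  refine vp2_comp_add_eq_top (a := 0) hp two_pos ?_
  filter_upwards [eventually_gt_atTop 1] with n hn
  have hstep : (1 / n : ℝ) ∈ Ioo (0 : ℝ) 1 :=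
    ⟨by positivity, by rw [one_div]; exact inv_lt_one_of_one_lt₀ (by exact_mod_cast hn)⟩
  rw [nonIntegerIndicator_second_difference_zero hstep, abs_two]

end NonIntegerIndicator

theorem statement16_general :
    ∃ f : ℝ → ℝ → ℝ, BiPeriodic f ∧
      ∀ p : ℝ, 0 < p → MemVpVp p f ∧ ¬ MemHp2 p f :=
  ⟨fun x y => nonIntegerIndicator (x + y), biPeriodic_comp_add periodic1_nonIntegerIndicator,
    fun _ hp => ⟨memVpVp_comp_add hp (vp_nonIntegerIndicator_lt_top hp),
      fun hf => hf.1.ne (vp2_nonIntegerIndicator_comp_add hp)⟩⟩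

/-- There is a biperiodic `f` with `f ∈ V_p[V_p]` but `f ∉ H_p⁽²⁾`
for every `1 ≤ p < ∞`; hence `V_p[V_p] ⊄ H_p⁽²⁾`. -/
theorem statement16 :
    ∃ f : ℝ → ℝ → ℝ, BiPeriodic f ∧
      ∀ p : ℝ, 1 ≤ p → MemVpVp p f ∧ ¬ MemHp2 p f :=
  statement16_general.imp fun _ hf => ⟨hf.1, fun p hp => hf.2 p (one_pos.trans_le hp)⟩
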